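/- arXiv:nlin/0607056 — 2 statements merged into one kernel-verified Lean document; each statement's English description precedes it below -/
import Mathlib

section
/- Let n ≥ 1 and let Y₁, …, Y_{2n} be real random variables on a probability space (Ω, P) which are jointly centered Gaussian, meaning every real linear combination Σᵢ cᵢ Yᵢ has a centered Gaussian law. Then the product Y₁⋯Y_{2n} is integrable and E[Y₁ Y₂ ⋯ Y_{2n}] = Σ_σ Π_{i : i < σ(i)} E[Y_i Y_{σ(i)}], where the sum ranges over all permutations σ of {1, …, 2n} with σ∘σ = id and σ(i) ≠ i for every i (complete Feynman diagrams, i.e. pairings), and the product is over the n pairs {i, σ(i)} with i < σ(i). -/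
open MeasureTheory ProbabilityTheory

/-!
Let `H` be a linear space of centered Gaussian variables. For `X, Z ∈ H`, differentiating
`E[exp (X + tZ)] = exp (E[(X + tZ)²] / 2)` at `t = 0` gives `E[Z exp X] = E[Z X] E[exp X]`.
Differentiating this successively in the directions `Y i ∈ H` and then setting `X = 0` yields
Gaussian integration by parts,
`E[Z ∏_{i ∈ s} Y i] = ∑_{i ∈ s} E[Z Y i] E[∏_{j ∈ s \ {i}} Y j]`.
The sum over pairings satisfies the same recursion: removing the edge `{a, σ a}` at the least
vertex `a` of `s` leaves a pairing of `s \ {a, σ a}`.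
-/

namespace Wick

section Pairings

open Equiv Finset

variable {ι : Type*} [Fintype ι]

/-- The complete Feynman diagrams on `s`, encoded as the involutions of the ambient type whose set
of non-fixed points is exactly `s`. -/
def pairings [DecidableEq ι] (s : Finset ι) : Finset (Perm ι) :=
  {σ | σ * σ = 1 ∧ σ.support = s}

lemma mem_pairings [DecidableEq ι] {s : Finset ι} {σ : Perm ι} :
    σ ∈ pairings s ↔ σ * σ = 1 ∧ σ.support = s := by
  simp [pairings]

lemma pairings_empty [DecidableEq ι] : pairings (∅ : Finset ι) = {1} := by
  ext σ
  simp +contextual [mem_pairings]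

lemma pairings_univ [DecidableEq ι] :
    pairings (univ : Finset ι) = univ.filter fun σ => σ * σ = 1 ∧ ∀ i, σ i ≠ i := by
  ext σ
  simp [mem_pairings, Finset.ext_iff]

lemma disjoint_swap_of_mem_pairings [DecidableEq ι] {s : Finset ι} {a b : ι} {τ : Perm ι}
    (hτ : τ ∈ pairings ((s.erase a).erase b)) (hab : a ≠ b) : (swap a b).Disjoint τ := by
  rw [Perm.disjoint_iff_disjoint_support, Perm.support_swap hab, (mem_pairings.1 hτ).2]
  simp

lemma swap_mul_mem_pairings [DecidableEq ι] {s : Finset ι} {a b : ι} {τ : Perm ι} (ha : a ∈ s)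
    (hb : b ∈ s) (hab : a ≠ b) (hτ : τ ∈ pairings ((s.erase a).erase b)) :
    swap a b * τ ∈ pairings s := by
  have hdisj := disjoint_swap_of_mem_pairings hτ hab
  obtain ⟨hinv, hsupp⟩ := mem_pairings.1 hτ
  refine mem_pairings.2 ⟨?_, ?_⟩
  · rw [hdisj.commute.symm.mul_mul_mul_comm, swap_mul_self, hinv, one_mul]
  · rw [hdisj.support_mul, Perm.support_swap hab, hsupp]
    grind

lemma swap_mul_mem_pairings_erase [DecidableEq ι] {s : Finset ι} {σ : Perm ι}
    (hσ : σ ∈ pairings s) (a : ι) :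
    swap a (σ a) * σ ∈ pairings ((s.erase a).erase (σ a)) := by
  obtain ⟨hinv, rfl⟩ := mem_pairings.1 hσ
  have hinv' (i : ι) : σ (σ i) = i := Perm.ext_iff.1 hinv i
  have hcomm : Commute σ (swap a (σ a)) := by
    rw [Commute, SemiconjBy, mul_swap_eq_swap_mul, hinv', swap_comm]
  refine mem_pairings.2 ⟨?_, ?_⟩
  · rw [hcomm.mul_mul_mul_comm, swap_mul_self, hinv, one_mul]
  · ext i
    have := hinv' i
    have := hinv' a
    simp only [Perm.mem_support, Perm.mul_apply, mem_erase, swap_apply_def]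
    grind

lemma apply_mem_erase_of_mem_pairings [DecidableEq ι] {s : Finset ι} {σ : Perm ι}
    (hσ : σ ∈ pairings s) {a : ι} (ha : a ∈ s) : σ a ∈ s.erase a := by
  obtain ⟨-, rfl⟩ := mem_pairings.1 hσ
  exact mem_erase.2 ⟨Perm.mem_support.1 ha, Perm.apply_mem_support.2 ha⟩

variable [LinearOrder ι]

section Value

variable {M : Type*} [CommMonoid M] (K : ι → ι → M)

/-- The value of a Feynman diagram `σ`: the product of `K` over its edges, each edge being listed
once, from its smaller to its larger endpoint. -/
def diagramValue (σ : Perm ι) : M :=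
  ∏ i with i < σ i, K i (σ i)

lemma diagramValue_one : diagramValue K 1 = 1 := by
  simp [diagramValue]

lemma diagramValue_swap {a b : ι} (hab : a < b) : diagramValue K (swap a b) = K a b := by
  have hfilter : ({i | i < swap a b i} : Finset ι) = {a} := by
    ext i
    grind
  rw [diagramValue, hfilter, prod_singleton, swap_apply_left]

lemma diagramValue_mul {σ τ : Perm ι} (hστ : σ.Disjoint τ) :
    diagramValue K (σ * τ) = diagramValue K σ * diagramValue K τ := by
  simp only [diagramValue, prod_filter, ← prod_mul_distrib]
  refine prod_congr rfl fun i _ => ?_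
  rcases hστ i with hi | hi
  · have : σ (τ i) = τ i := by
      rw [← Perm.mul_apply, hστ.commute.eq, Perm.mul_apply, hi]
    simp [hi, this]
  · simp [hi]

end Value

variable {R : Type*} [CommSemiring R] (K : ι → ι → R)

/-- The sum of the values of all complete Feynman diagrams on `s`. -/
def diagramSum (s : Finset ι) : R :=
  ∑ σ ∈ pairings s, diagramValue K σ

lemma diagramSum_empty : diagramSum K ∅ = 1 := by
  rw [diagramSum, pairings_empty, sum_singleton, diagramValue_one]

lemma sum_diagramValue_of_apply_eq {s : Finset ι} {a b : ι} (ha : a ∈ s) (hb : b ∈ s)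
    (hab : a < b) :
    ∑ σ ∈ pairings s with σ a = b, diagramValue K σ =
      K a b * diagramSum K ((s.erase a).erase b) := by
  rw [diagramSum, mul_sum]
  refine sum_nbij' (swap a b * ·) (swap a b * ·) (fun σ hσ => ?_) (fun τ hτ => ?_)
    (fun σ _ => swap_mul_self_mul a b σ) (fun τ _ => swap_mul_self_mul a b τ) (fun σ hσ => ?_)
  · obtain ⟨hσs, rfl⟩ := mem_filter.1 hσ
    exact swap_mul_mem_pairings_erase hσs a
  · have hτa : τ a = a := Perm.notMem_support.1 (by simp [(mem_pairings.1 hτ).2])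
    simp [swap_mul_mem_pairings ha hb hab.ne hτ, hτa]
  · obtain ⟨hσs, rfl⟩ := mem_filter.1 hσ
    have hdisj := disjoint_swap_of_mem_pairings (swap_mul_mem_pairings_erase hσs a) hab.ne
    rw [← diagramValue_swap K hab, ← diagramValue_mul K hdisj, swap_mul_self_mul]

lemma diagramSum_eq_sum_erase {s : Finset ι} {a : ι} (ha : a ∈ s) (hmin : ∀ b ∈ s, a ≤ b) :
    diagramSum K s = ∑ b ∈ s.erase a, K a b * diagramSum K ((s.erase a).erase b) := by
  rw [diagramSum, ← sum_fiberwise_of_maps_to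
    (fun σ hσ => apply_mem_erase_of_mem_pairings hσ ha)]
  refine sum_congr rfl fun b hb => ?_
  obtain ⟨hba, hbs⟩ := mem_erase.1 hb
  exact sum_diagramValue_of_apply_eq K ha hbs (lt_of_le_of_ne (hmin b hbs) hba.symm)

end Pairings

section Gaussian

open Real
open scoped ENNReal

variable {Ω : Type*} [MeasurableSpace Ω] {P : Measure Ω}

lemma hasDerivAt_integral_mul_exp {f Z : Ω → ℝ} (hZ : AEMeasurable Z P) (hf : Integrable f P)
    (hpos : Integrable (fun ω => f ω * Z ω * exp (Z ω)) P)
    (hneg : Integrable (fun ω => f ω * Z ω * exp (-Z ω)) P) :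
    HasDerivAt (fun t : ℝ => ∫ ω, f ω * exp (t * Z ω) ∂P) (∫ ω, f ω * Z ω ∂P) 0 := by
  have hf' : AEMeasurable f P := hf.aemeasurable
  have hbound (ω : Ω) (t : ℝ) (ht : t ∈ Metric.ball 0 1) :
      ‖f ω * Z ω * exp (t * Z ω)‖ ≤
        ‖f ω * Z ω * exp (Z ω)‖ + ‖f ω * Z ω * exp (-Z ω)‖ := by
    have habs : |t * Z ω| ≤ |Z ω| := by
      rw [abs_mul]
      exact mul_le_of_le_one_left (abs_nonneg _) (mem_ball_zero_iff.1 ht |>.le)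
    have hexp : exp (t * Z ω) ≤ exp (Z ω) + exp (-Z ω) :=
      calc exp (t * Z ω) ≤ exp |Z ω| := exp_le_exp.2 ((le_abs_self _).trans habs)
        _ ≤ exp (Z ω) + exp (-Z ω) := exp_abs_le _
    simp only [norm_mul, norm_of_nonneg (exp_pos _).le, ← mul_add]
    gcongr
  have hderiv (ω : Ω) (t : ℝ) :
      HasDerivAt (fun t => f ω * exp (t * Z ω)) (f ω * Z ω * exp (t * Z ω)) t := by
    convert! ((hasDerivAt_mul_const (Z ω)).exp.const_mul (f ω)) using 1
    ring
  simpa using (hasDerivAt_integral_of_dominated_loc_of_deriv_le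
    (Metric.ball_mem_nhds 0 one_pos) (.of_forall fun t => by fun_prop) (by simpa using hf)
    (by fun_prop) (.of_forall hbound) (hpos.norm.add hneg.norm)
    (.of_forall fun ω t _ => hderiv ω t)).2

lemma hasDerivAt_exp_quadratic_div_two (a b c : ℝ) :
    HasDerivAt (fun t : ℝ => exp ((a + 2 * t * b + t ^ 2 * c) / 2)) (b * exp (a / 2)) 0 := by
  have hid := hasDerivAt_id (0 : ℝ)
  convert! ((((hid.const_mul 2).mul_const b).const_add a).add
    ((hid.pow 2).mul_const c)).div_const 2 |>.exp using 1
  simp [mul_comm]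

/-- `f` has finite absolute moments of all orders under `P`. -/
def HasFiniteMoments (f : Ω → ℝ) (P : Measure Ω) : Prop :=
  ∀ p : ℝ≥0∞, p ≠ ∞ → MemLp f p P

lemma HasFiniteMoments.mul {f g : Ω → ℝ} (hf : HasFiniteMoments f P)
    (hg : HasFiniteMoments g P) : HasFiniteMoments (fun ω => f ω * g ω) P := by
  intro p hp
  have : ENNReal.HolderTriple (2 * p) (2 * p) p := ⟨by
    rw [ENNReal.mul_inv (by simp) (by simp), ← add_mul, ENNReal.inv_two_add_inv_two, one_mul]⟩
  have h2p : 2 * p ≠ ∞ := ENNReal.mul_ne_top (by simp) hp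
  exact (hg _ h2p).mul' (hf _ h2p)

lemma HasFiniteMoments.prod [IsFiniteMeasure P] {ι : Type*} {s : Finset ι} {f : ι → Ω → ℝ}
    (hf : ∀ i ∈ s, HasFiniteMoments (f i) P) :
    HasFiniteMoments (fun ω => ∏ i ∈ s, f i ω) P := by
  induction s using Finset.cons_induction with
  | empty => exact fun p _ => by simpa using memLp_const 1
  | cons i s hi ih =>
    simp only [Finset.prod_cons]
    rw [Finset.forall_mem_cons] at hf
    exact hf.1.mul (ih hf.2)

lemma HasFiniteMoments.integrable {f : Ω → ℝ} (hf : HasFiniteMoments f P) : Integrable f P :=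
  memLp_one_iff_integrable.1 (hf 1 ENNReal.one_ne_top)

/-- A Gaussian linear space: a real vector space of random variables, each of which has a centered
(possibly degenerate) Gaussian law. Its elements are functions, not classes modulo null sets. -/
def IsGaussianSpace (H : Submodule ℝ (Ω → ℝ)) (P : Measure Ω) : Prop :=
  ∀ X ∈ H, HasGaussianLaw X P ∧ ∫ ω, X ω ∂P = 0

lemma isGaussianSpace_span_range {ι : Type*} [Fintype ι] {Y : ι → Ω → ℝ}
    (hY : ∀ c : ι → ℝ, ∃ V : NNReal, P.map (fun ω => ∑ i, c i * Y i ω) = gaussianReal 0 V) :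
    IsGaussianSpace (Submodule.span ℝ (Set.range Y)) P := by
  intro X hX
  obtain ⟨c, rfl⟩ := (Submodule.mem_span_range_iff_exists_fun ℝ).1 hX
  have hsum : ∑ i, c i • Y i = fun ω => ∑ i, c i * Y i ω := by
    ext ω
    simp
  obtain ⟨V, hV⟩ := hY c
  rw [hsum]
  have hlaw : HasGaussianLaw (fun ω => ∑ i, c i * Y i ω) P := ⟨by rw [hV]; infer_instance⟩
  refine ⟨hlaw, ?_⟩
  rw [← integral_map (f := fun x : ℝ => x) hlaw.aemeasurable (by fun_prop), hV,
    integral_id_gaussianReal]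

namespace IsGaussianSpace

variable {H : Submodule ℝ (Ω → ℝ)} {X Z : Ω → ℝ}

lemma isProbabilityMeasure (hH : IsGaussianSpace H P) : IsProbabilityMeasure P :=
  (hH 0 H.zero_mem).1.isProbabilityMeasure

lemma hasFiniteMoments (hH : IsGaussianSpace H P) (hX : X ∈ H) : HasFiniteMoments X P :=
  fun _ => (hH X hX).1.memLp

lemma map_eq_gaussianReal (hH : IsGaussianSpace H P) (hX : X ∈ H) :
    P.map X = gaussianReal 0 (∫ ω, X ω ^ 2 ∂P).toNNReal := by
  obtain ⟨hlaw, hmean⟩ := hH X hX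
  rw [hlaw.map_eq_gaussianReal, variance_of_integral_eq_zero hlaw.aemeasurable hmean, hmean]

lemma integral_exp (hH : IsGaussianSpace H P) (hX : X ∈ H) :
    ∫ ω, exp (X ω) ∂P = exp ((∫ ω, X ω ^ 2 ∂P) / 2) := by
  have hvar : 0 ≤ ∫ ω, X ω ^ 2 ∂P := integral_nonneg fun ω => sq_nonneg _
  simpa [mgf, hvar] using mgf_gaussianReal (hH.map_eq_gaussianReal hX) 1

lemma integrable_exp (hH : IsGaussianSpace H P) (hX : X ∈ H) :
    Integrable (fun ω => exp (X ω)) P := by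
  refine not_imp_comm.1 integral_undef ?_
  rw [hH.integral_exp hX]
  exact (exp_pos _).ne'

lemma memLp_two_exp (hH : IsGaussianSpace H P) (hX : X ∈ H) :
    MemLp (fun ω => exp (X ω)) 2 P := by
  have hsq : (fun ω => exp (X ω) ^ 2) = fun ω => exp (((2 : ℝ) • X) ω) := by
    ext ω
    simp [← exp_nat_mul]
  rw [memLp_two_iff_integrable_sq (hH.integrable_exp hX).aestronglyMeasurable, hsq]
  exact hH.integrable_exp (H.smul_mem 2 hX)

lemma integrable_mul_exp (hH : IsGaussianSpace H P) {f : Ω → ℝ} (hf : HasFiniteMoments f P)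
    (hX : X ∈ H) : Integrable (fun ω => f ω * exp (X ω)) P :=
  (hf 2 ENNReal.ofNat_ne_top).integrable_mul (hH.memLp_two_exp hX)

lemma hasDerivAt_integral_mul_exp_add_smul (hH : IsGaussianSpace H P) {f : Ω → ℝ}
    (hf : HasFiniteMoments f P) (hX : X ∈ H) (hZ : Z ∈ H) :
    HasDerivAt (fun t : ℝ => ∫ ω, f ω * exp ((X + t • Z) ω) ∂P)
      (∫ ω, f ω * Z ω * exp (X ω) ∂P) 0 := by
  have hfZ := hf.mul (hH.hasFiniteMoments hZ)
  have hderiv := hasDerivAt_integral_mul_exp (hH Z hZ).1.aemeasurable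
    (hH.integrable_mul_exp hf hX)
    ((hH.integrable_mul_exp hfZ (H.add_mem hX hZ)).congr
      (.of_forall fun ω => by simp only [Pi.add_apply, exp_add]; ring))
    ((hH.integrable_mul_exp hfZ (H.sub_mem hX hZ)).congr
      (.of_forall fun ω => by simp only [Pi.sub_apply, sub_eq_add_neg, exp_add]; ring))
  simpa only [Pi.add_apply, Pi.smul_apply, smul_eq_mul, exp_add, mul_assoc, mul_left_comm,
    mul_comm] using hderiv

lemma integrable_mul (hH : IsGaussianSpace H P) (hZ : Z ∈ H) (hX : X ∈ H) :
    Integrable (fun ω => Z ω * X ω) P :=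
  ((hH.hasFiniteMoments hZ).mul (hH.hasFiniteMoments hX)).integrable

lemma integral_mul_add_smul (hH : IsGaussianSpace H P) {W : Ω → ℝ} (hW : W ∈ H) (hX : X ∈ H)
    (hZ : Z ∈ H) (t : ℝ) :
    ∫ ω, W ω * (X + t • Z) ω ∂P = ∫ ω, W ω * X ω ∂P + t * ∫ ω, W ω * Z ω ∂P := by
  simp only [Pi.add_apply, Pi.smul_apply, smul_eq_mul, mul_add, mul_left_comm _ t]
  rw [integral_add (hH.integrable_mul hW hX) ((hH.integrable_mul hW hZ).const_mul t),
    integral_const_mul]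

lemma integral_add_smul_sq (hH : IsGaussianSpace H P) (hX : X ∈ H) (hZ : Z ∈ H) (t : ℝ) :
    ∫ ω, (X + t • Z) ω ^ 2 ∂P =
      ∫ ω, X ω ^ 2 ∂P + 2 * t * ∫ ω, Z ω * X ω ∂P + t ^ 2 * ∫ ω, Z ω ^ 2 ∂P := by
  have hXt := H.add_mem hX (H.smul_mem t hZ)
  simp only [sq]
  rw [hH.integral_mul_add_smul hXt hX hZ]
  simp only [mul_comm ((X + t • Z) _)]
  rw [hH.integral_mul_add_smul hX hX hZ, hH.integral_mul_add_smul hZ hX hZ]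
  simp only [mul_comm (X _) (Z _)]
  ring

lemma integral_mul_exp (hH : IsGaussianSpace H P) (hZ : Z ∈ H) (hX : X ∈ H) :
    ∫ ω, Z ω * exp (X ω) ∂P = (∫ ω, Z ω * X ω ∂P) * ∫ ω, exp (X ω) ∂P := by
  have := hH.isProbabilityMeasure
  have hleft := hH.hasDerivAt_integral_mul_exp_add_smul (f := fun _ => 1)
    (fun _ _ => memLp_const 1) hX hZ
  simp only [one_mul, hH.integral_exp (H.add_mem hX (H.smul_mem _ hZ)),
    hH.integral_add_smul_sq hX hZ] at hleft
  rw [hleft.unique (hasDerivAt_exp_quadratic_div_two _ _ _), hH.integral_exp hX]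

variable {ι : Type*} {Y : ι → Ω → ℝ}

lemma hasFiniteMoments_prod (hH : IsGaussianSpace H P) (hY : ∀ i, Y i ∈ H) (s : Finset ι) :
    HasFiniteMoments (fun ω => ∏ i ∈ s, Y i ω) P :=
  have := hH.isProbabilityMeasure
  .prod fun i _ => hH.hasFiniteMoments (hY i)

lemma hasDerivAt_integral_prod_mul_exp_add_smul [DecidableEq ι] (hH : IsGaussianSpace H P)
    (hY : ∀ i, Y i ∈ H) (hX : X ∈ H) {s : Finset ι} {a : ι} (ha : a ∉ s) :
    HasDerivAt (fun t : ℝ => ∫ ω, (∏ i ∈ s, Y i ω) * exp ((X + t • Y a) ω) ∂P)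
      (∫ ω, (∏ i ∈ insert a s, Y i ω) * exp (X ω) ∂P) 0 := by
  simpa only [Finset.prod_insert ha, mul_comm (Y a _)] using
    hH.hasDerivAt_integral_mul_exp_add_smul (hH.hasFiniteMoments_prod hY s) hX (hY a)

lemma hasDerivAt_integral_mul_add_smul (hH : IsGaussianSpace H P) {W : Ω → ℝ} (hW : W ∈ H)
    (hX : X ∈ H) (hZ : Z ∈ H) :
    HasDerivAt (fun t : ℝ => ∫ ω, W ω * (X + t • Z) ω ∂P) (∫ ω, W ω * Z ω ∂P) 0 := by
  simp only [hH.integral_mul_add_smul hW hX hZ]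
  exact (hasDerivAt_mul_const _).const_add _

-- The exponential weight makes the induction on `s` work: differentiating the identity for `s`
-- along `X + t • Y a` at `t = 0` gives the identity for `insert a s`.
lemma integral_mul_prod_mul_exp [DecidableEq ι] (hH : IsGaussianSpace H P) (hY : ∀ i, Y i ∈ H)
    (hZ : Z ∈ H) (hX : X ∈ H) (s : Finset ι) :
    ∫ ω, Z ω * (∏ i ∈ s, Y i ω) * exp (X ω) ∂P =
      (∫ ω, Z ω * X ω ∂P) * ∫ ω, (∏ i ∈ s, Y i ω) * exp (X ω) ∂P +
        ∑ i ∈ s, (∫ ω, Z ω * Y i ω ∂P) * ∫ ω, (∏ j ∈ s.erase i, Y j ω) * exp (X ω) ∂P := by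
  induction s using Finset.induction_on generalizing X with
  | empty => simpa using hH.integral_mul_exp hZ hX
  | insert a s ha ih =>
    have hleft := hH.hasDerivAt_integral_mul_exp_add_smul
      ((hH.hasFiniteMoments hZ).mul (hH.hasFiniteMoments_prod hY s)) hX (hY a)
    have hright := ((hH.hasDerivAt_integral_mul_add_smul hZ hX (hY a)).mul
      (hH.hasDerivAt_integral_prod_mul_exp_add_smul hY hX ha)).add
        (HasDerivAt.fun_sum fun i (_ : i ∈ s) =>
          (hH.hasDerivAt_integral_prod_mul_exp_add_smul hY hX
            (fun h => ha (Finset.mem_of_mem_erase h) : a ∉ s.erase i)).const_mul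
              (∫ ω, Z ω * Y i ω ∂P))
    have hderiv := hleft.unique (hright.congr_of_eventuallyEq (.of_forall fun t =>
      ih (H.add_mem hX (H.smul_mem t (hY a)))))
    have herase : ∀ i ∈ s, (insert a s).erase i = insert a (s.erase i) := fun i hi =>
      Finset.erase_insert_of_ne fun h => ha (h ▸ hi)
    rw [Finset.sum_insert ha, Finset.erase_insert ha,
      Finset.sum_congr rfl fun i hi => by rw [herase i hi]]
    simp only [zero_smul, add_zero] at hderiv
    calc ∫ ω, Z ω * (∏ i ∈ insert a s, Y i ω) * exp (X ω) ∂P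
        = ∫ ω, Z ω * (∏ i ∈ s, Y i ω) * Y a ω * exp (X ω) ∂P := by
          simp only [Finset.prod_insert ha, mul_comm (Y a _), mul_assoc]
      _ = _ := by rw [hderiv]; ring

lemma integral_mul_prod [DecidableEq ι] (hH : IsGaussianSpace H P) (hY : ∀ i, Y i ∈ H)
    (hZ : Z ∈ H) (s : Finset ι) :
    ∫ ω, Z ω * ∏ i ∈ s, Y i ω ∂P =
      ∑ i ∈ s, (∫ ω, Z ω * Y i ω ∂P) * ∫ ω, ∏ j ∈ s.erase i, Y j ω ∂P := by
  simpa using hH.integral_mul_prod_mul_exp hY hZ H.zero_mem s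

theorem integral_prod_eq_diagramSum [Fintype ι] [LinearOrder ι] (hH : IsGaussianSpace H P)
    (hY : ∀ i, Y i ∈ H) (s : Finset ι) :
    ∫ ω, ∏ i ∈ s, Y i ω ∂P = diagramSum (fun i j => ∫ ω, Y i ω * Y j ω ∂P) s := by
  have := hH.isProbabilityMeasure
  induction s using Finset.strongInduction with
  | H s ih =>
  rcases s.eq_empty_or_nonempty with rfl | hs
  · simp [diagramSum_empty]
  · have ha := s.min'_mem hs
    simp only [← Finset.mul_prod_erase s _ ha]
    rw [hH.integral_mul_prod hY (hY _), diagramSum_eq_sum_erase _ ha s.min'_le]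
    refine Finset.sum_congr rfl fun i _ => ?_
    rw [ih _ ((Finset.erase_subset _ _).trans_ssubset (Finset.erase_ssubset ha))]

end IsGaussianSpace

end Gaussian

end Wick

theorem stmt12_general {Ω : Type*} [MeasurableSpace Ω] (P : Measure Ω) {ι : Type*} [Fintype ι]
    [LinearOrder ι] (Y : ι → Ω → ℝ)
    (hgauss : ∀ c : ι → ℝ, ∃ V : NNReal,
      Measure.map (fun ω => ∑ i, c i * Y i ω) P = gaussianReal 0 V) :
    Integrable (fun ω => ∏ i, Y i ω) P ∧
    ∫ ω, ∏ i, Y i ω ∂P =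
      ∑ σ ∈ Finset.univ.filter (fun σ : Equiv.Perm ι => σ * σ = 1 ∧ ∀ i, σ i ≠ i),
        ∏ i ∈ Finset.univ.filter (fun i => i < σ i), ∫ ω, Y i ω * Y (σ i) ω ∂P := by
  have hH := Wick.isGaussianSpace_span_range hgauss
  have hY (i : ι) : Y i ∈ Submodule.span ℝ (Set.range Y) := Submodule.subset_span ⟨i, rfl⟩
  refine ⟨(hH.hasFiniteMoments_prod hY Finset.univ).integrable, ?_⟩
  rw [hH.integral_prod_eq_diagramSum hY, Wick.diagramSum, Wick.pairings_univ]
  rfl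

/-- Wick/Isserlis formula: If `Y₁, …, Y_{2n}` are jointly centered Gaussian
real random variables (every real linear combination has a centered Gaussian law), then
`Y₁⋯Y_{2n}` is integrable and
`E[Y₁⋯Y_{2n}] = Σ_σ Π_{i < σ(i)} E[Y_i Y_{σ(i)}]`, the sum being over all fixed-point-free
involutive permutations (pairings) of `{1, …, 2n}`. -/
theorem stmt12 {Ω : Type*} [MeasurableSpace Ω] (P : Measure Ω) [IsProbabilityMeasure P]
    (n : ℕ) (hn : 1 ≤ n) (Y : Fin (2 * n) → Ω → ℝ)
    (hmeas : ∀ i, Measurable (Y i))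
    (hgauss : ∀ c : Fin (2 * n) → ℝ, ∃ V : NNReal,
      Measure.map (fun ω => ∑ i, c i * Y i ω) P = gaussianReal 0 V) :
    Integrable (fun ω => ∏ i, Y i ω) P ∧
    ∫ ω, ∏ i, Y i ω ∂P =
      ∑ σ ∈ Finset.univ.filter
          (fun σ : Equiv.Perm (Fin (2 * n)) => σ * σ = 1 ∧ ∀ i, σ i ≠ i),
        ∏ i ∈ Finset.univ.filter (fun i => i < σ i), ∫ ω, Y i ω * Y (σ i) ω ∂P := by
  convert stmt12_general P Y hgauss
end

section
/- Let α ∈ (1/2, 1) and let ({1,…,n}, E, A, L) be a pairing structure with n = a + 2e. Set w(k) := (1 + log⁺|k|) · |k|^{1-2α} for k ≠ 0, where log⁺ x = max(log x, 0). Define g : ℝ^A → [0, ∞] by g((k_m)_{m∈A}) := ∫_{ℝ^L} Π_{j=1}^n (1 + |S_j|)^{-1} Π_{p∈L} w(k_p) d(k_p)_{p∈L}. Then ∫_{ℝ^A} g((k_m)_{m∈A})² Π_{m∈A} w(k_m) d(k_m)_{m∈A} < ∞. -/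
open MeasureTheory

/-- A pairing structure on `{1, …, n}` is encoded by an involution `σ` of `Fin n`:
the free indices `A` are the fixed points, the set of left endpoints `L` is
`{j | j < σ j}`, and `(p, σ p)` with `p < σ p` are the pairs.  Given values
`kA` on `A` and `kL` on `L`, `combine σ hσ kA kL : Fin n → ℝ` is the vector `k̃` with
`k̃_j = kA_j` for `j ∈ A`, `k̃_j = kL_j` for `j ∈ L`, and `k̃_q = -kL_p` when `q = σ p`,
`p < q`. -/
noncomputable def combine {n : ℕ} (σ : Equiv.Perm (Fin n)) (hσ : ∀ j, σ (σ j) = j)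
    (kA : {j : Fin n // σ j = j} → ℝ) (kL : {j : Fin n // j < σ j} → ℝ) :
    Fin n → ℝ := fun j =>
  if h : σ j = j then kA ⟨j, h⟩
  else if h' : j < σ j then kL ⟨j, h'⟩
  else -kL ⟨σ j, by
    have h2 : σ j < j := lt_of_le_of_ne (not_lt.mp h') h
    rw [hσ j]; exact h2⟩

/-- The partial sums `S_j = k̃_1 + ⋯ + k̃_j`. -/
noncomputable def partialSum {n : ℕ} (k : Fin n → ℝ) (j : Fin n) : ℝ :=
  ∑ i ∈ Finset.Iic j, k i

/-!
Put `D s = (1 + |s|)⁻¹`. The point is that `B := sup_s ∫ D (k + s) w(k) dk` is finite: near the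
origin `w` is integrable, and far away `w(k)` is at most a multiple of `(1 + |k|) ^ (-δ)` with
`δ > 0`, so that `D (k + s) w(k)` is dominated by an integrable function of `k` plus one of `k + s`.

Among the factors `D (S_j)` keep those with `j ∈ A ∪ L`, and integrate the variables out from the
largest index down. When `k_j` is integrated, the only remaining sum involving it is
`S_j = k_j + S_{j-1}`, and `S_{j-1}` does not involve `k_j`, so the integration costs a factor `B`.
Integrating over `ℝ^L` alone gives `g ≤ B ^ e`, while integrating over `ℝ^A × ℝ^L` gives
`∫ g ∏ w ≤ B ^ (a + e)`; hence `∫ g² ∏ w ≤ B ^ e * B ^ (a + e)`.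
-/

open scoped ENNReal

section SequentialIntegration

variable {ι β : Type*} [DecidableEq ι] [LinearOrder β] {X : ι → Type*}
  [∀ i, MeasurableSpace (X i)] {μ : ∀ i, Measure (X i)} [∀ i, SigmaFinite (μ i)]

theorem lmarginal_prod_le_prod_of_dependsOn {rank : ι → β}
    (hrank : Function.Injective rank) {f : ι → (∀ i, X i) → ℝ≥0∞} (hf : ∀ j, Measurable (f j))
    (hdep : ∀ j, DependsOn (f j) {i | rank i ≤ rank j}) {C : ι → ℝ≥0∞}
    (hC : ∀ j x, ∫⁻ t, f j (Function.update x j t) ∂μ j ≤ C j) (s : Finset ι) (x : ∀ i, X i) :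
    (∫⋯∫⁻_s, (fun y ↦ ∏ j ∈ s, f j y) ∂μ) x ≤ ∏ j ∈ s, C j := by
  induction s using Finset.induction_on_max_value rank with
  | empty => simp
  | insert i s his hmax ih =>
    have hprod_meas (u : Finset ι) : Measurable fun y ↦ ∏ j ∈ u, f j y :=
      Finset.measurable_fun_prod _ fun j _ ↦ hf j
    have hupdate (y : ∀ i, X i) (t : X i) :
        ∏ j ∈ s, f j (Function.update y i t) = ∏ j ∈ s, f j y := by
      refine Finset.prod_congr rfl fun j hj ↦ hdep j fun l hl ↦ Function.update_of_ne ?_ _ _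
      rintro rfl
      exact his (hrank (le_antisymm hl (hmax j hj)) ▸ hj)
    have hpeel (y : ∀ i, X i) :
        ∫⁻ t, ∏ j ∈ insert i s, f j (Function.update y i t) ∂μ i ≤ C i * ∏ j ∈ s, f j y := by
      simp only [Finset.prod_insert his, hupdate]
      rw [lintegral_mul_const _ (by fun_prop)]
      gcongr
      exact hC i y
    calc (∫⋯∫⁻_insert i s, (fun y ↦ ∏ j ∈ insert i s, f j y) ∂μ) x
        ≤ (∫⋯∫⁻_s, (fun y ↦ C i * ∏ j ∈ s, f j y) ∂μ) x := by
          rw [lmarginal_insert' _ (hprod_meas _) his]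
          exact lmarginal_mono hpeel x
      _ = C i * (∫⋯∫⁻_s, (fun y ↦ ∏ j ∈ s, f j y) ∂μ) x :=
          lintegral_const_mul _ ((hprod_meas s).comp measurable_updateFinset)
      _ ≤ ∏ j ∈ insert i s, C j := by
          rw [Finset.prod_insert his]
          gcongr

theorem lintegral_prod_le_prod_of_dependsOn [Fintype ι] {rank : ι → β}
    (hrank : Function.Injective rank) {f : ι → (∀ i, X i) → ℝ≥0∞} (hf : ∀ j, Measurable (f j))
    (hdep : ∀ j, DependsOn (f j) {i | rank i ≤ rank j}) {C : ι → ℝ≥0∞}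
    (hC : ∀ j x, ∫⁻ t, f j (Function.update x j t) ∂μ j ≤ C j) :
    ∫⁻ x, ∏ j, f j x ∂Measure.pi μ ≤ ∏ j, C j := by
  cases isEmpty_or_nonempty (∀ i, X i) with
  | inl _ => simp
  | inr h =>
    obtain ⟨x⟩ := h
    rw [lintegral_eq_lmarginal_univ x]
    exact lmarginal_prod_le_prod_of_dependsOn hrank hf hdep hC _ x

end SequentialIntegration

/-- The damping factor `(1 + |s|)⁻¹` attached to a partial sum `s`. -/
noncomputable def damping (s : ℝ) : ℝ≥0∞ := ENNReal.ofReal (1 + |s|)⁻¹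

@[fun_prop]
theorem measurable_damping : Measurable damping := by
  unfold damping
  fun_prop

theorem damping_le_one (s : ℝ) : damping s ≤ 1 :=
  ENNReal.ofReal_le_one.2 (inv_le_one_of_one_le₀ (le_add_of_nonneg_right (abs_nonneg s)))

section AdaptedExtension

variable {ι : Type*} {n : ℕ}

/-- The vector `κ k : Fin n → ℝ` extends `k : ι → ℝ`, placed at the positions `pos i`, in such a way
that its `j`-th entry only involves the entries of `k` placed at positions up to `j`. -/
structure IsAdaptedExtension (pos : ι → Fin n) (κ : (ι → ℝ) → Fin n → ℝ) : Prop where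
  injective_pos : Function.Injective pos
  measurable : Measurable κ
  apply_pos : ∀ k i, κ k (pos i) = k i
  dependsOn : ∀ j, DependsOn (fun k ↦ κ k j) {i | pos i ≤ j}

theorem partialSum_eq_add_sum_Iio (k : Fin n → ℝ) (j : Fin n) :
    partialSum k j = k j + ∑ i ∈ Finset.Iio j, k i := by
  rw [partialSum, ← Finset.Iio_insert, Finset.sum_insert (by simp)]

@[fun_prop]
theorem measurable_partialSum (j : Fin n) : Measurable fun k : Fin n → ℝ ↦ partialSum k j := by
  unfold partialSum
  fun_prop

namespace IsAdaptedExtension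

variable {pos : ι → Fin n} {κ : (ι → ℝ) → Fin n → ℝ}

theorem dependsOn_partialSum (h : IsAdaptedExtension pos κ) (j : Fin n) :
    DependsOn (fun k ↦ partialSum (κ k) j) {i | pos i ≤ j} := fun _ _ hkk' ↦
  Finset.sum_congr rfl fun l hl ↦
    h.dependsOn l fun i hi ↦ hkk' i (le_trans hi (Finset.mem_Iic.1 hl))

theorem partialSum_update [DecidableEq ι] (h : IsAdaptedExtension pos κ) (k : ι → ℝ) (i : ι)
    (t : ℝ) :
    partialSum (κ (Function.update k i t)) (pos i) = t + ∑ l ∈ Finset.Iio (pos i), κ k l := by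
  rw [partialSum_eq_add_sum_Iio, h.apply_pos, Function.update_self]
  congr 1
  refine Finset.sum_congr rfl fun l hl ↦ h.dependsOn l fun i' hi' ↦ Function.update_of_ne ?_ _ _
  rintro rfl
  exact (Finset.mem_Iio.1 hl).not_ge hi'

theorem lintegral_prod_damping_mul_prod_le [Fintype ι] (h : IsAdaptedExtension pos κ)
    {w : ℝ → ℝ≥0∞} (hw : Measurable w) {B : ℝ≥0∞} (hB : ∀ s, ∫⁻ t, damping (t + s) * w t ≤ B) :
    ∫⁻ k, (∏ j, damping (partialSum (κ k) j)) * ∏ i, w (k i) ≤ B ^ Fintype.card ι := by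
  classical
  have hprod (k : ι → ℝ) : ∏ j, damping (partialSum (κ k) j) ≤
      ∏ i, damping (partialSum (κ k) (pos i)) := by
    rw [← Finset.prod_image (f := fun j ↦ damping (partialSum (κ k) j)) h.injective_pos.injOn]
    exact Finset.prod_le_prod_of_subset_of_le_one' (Finset.subset_univ _)
      fun j _ _ ↦ damping_le_one _
  calc ∫⁻ k, (∏ j, damping (partialSum (κ k) j)) * ∏ i, w (k i)
      ≤ ∫⁻ k : ι → ℝ, ∏ i, damping (partialSum (κ k) (pos i)) * w (k i) := by
        refine lintegral_mono fun k ↦ ?_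
        rw [Finset.prod_mul_distrib]
        gcongr
        exact hprod k
    _ ≤ ∏ _i : ι, B := by
        have := h.measurable
        refine lintegral_prod_le_prod_of_dependsOn h.injective_pos (fun i ↦ by fun_prop)
          (fun i k k' hkk' ↦ ?_) fun i k ↦ ?_
        · simp only [h.dependsOn_partialSum (pos i) hkk', hkk' i (le_refl (pos i))]
        · simpa only [h.partialSum_update, Function.update_self] using hB _
    _ = B ^ Fintype.card ι := Finset.prod_const B

end IsAdaptedExtension

end AdaptedExtension

section Pairing

variable {n : ℕ} (σ : Equiv.Perm (Fin n))

/-- The set `A` of unpaired indices. -/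
abbrev FreeIndex : Type := {j : Fin n // σ j = j}

/-- The set `L` of left endpoints of pairs. -/
abbrev LeftIndex : Type := {j : Fin n // j < σ j}

/-- The position in `{1, …, n}` of an index in `A ∪ L`, encoded as the disjoint sum of the types
`A` and `L`. -/
def sumPosition : FreeIndex σ ⊕ LeftIndex σ → Fin n := Sum.elim Subtype.val Subtype.val

theorem injective_sumPosition : Function.Injective (sumPosition σ) :=
  Subtype.val_injective.sumElim Subtype.val_injective fun m p hmp ↦
    p.2.ne (by rw [← hmp, m.2])

variable (hσ : ∀ j, σ (σ j) = j) (kA : FreeIndex σ → ℝ) (kL : LeftIndex σ → ℝ)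

theorem combine_apply_freeIndex (m : FreeIndex σ) : combine σ hσ kA kL m = kA m := by
  rw [combine, dif_pos m.2]

theorem combine_apply_leftIndex (p : LeftIndex σ) : combine σ hσ kA kL p = kL p := by
  rw [combine, dif_neg p.2.ne', dif_pos p.2]

theorem combine_congr_of_le {kA kA' : FreeIndex σ → ℝ} {kL kL' : LeftIndex σ → ℝ} {j : Fin n}
    (hA : ∀ m : FreeIndex σ, m ≤ j → kA m = kA' m) (hL : ∀ p : LeftIndex σ, p ≤ j → kL p = kL' p) :
    combine σ hσ kA kL j = combine σ hσ kA' kL' j := by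
  unfold combine
  split_ifs with hfree hleft
  · exact hA _ le_rfl
  · exact hL _ le_rfl
  · rw [hL _ (not_lt.1 hleft)]

theorem measurable_combine :
    Measurable fun k : (FreeIndex σ → ℝ) × (LeftIndex σ → ℝ) ↦ combine σ hσ k.1 k.2 := by
  refine measurable_pi_lambda _ fun j ↦ ?_
  unfold combine
  split_ifs <;> fun_prop

theorem isAdaptedExtension_combine_left :
    IsAdaptedExtension Subtype.val (fun kL ↦ combine σ hσ kA kL) where
  injective_pos := Subtype.val_injective
  measurable := (measurable_combine σ hσ).comp measurable_prodMk_left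
  apply_pos := combine_apply_leftIndex σ hσ kA
  dependsOn _ _ _ hkk' := combine_congr_of_le σ hσ (fun _ _ ↦ rfl) hkk'

theorem isAdaptedExtension_combine_sum :
    IsAdaptedExtension (sumPosition σ)
      (fun k ↦ combine σ hσ (fun m ↦ k (.inl m)) (fun p ↦ k (.inr p))) where
  injective_pos := injective_sumPosition σ
  measurable := (measurable_combine σ hσ).comp
    (MeasurableEquiv.sumPiEquivProdPi fun _ ↦ ℝ).measurable
  apply_pos _
    | .inl m => combine_apply_freeIndex σ hσ _ _ m
    | .inr p => combine_apply_leftIndex σ hσ _ _ p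
  dependsOn _ _ _ hkk' := combine_congr_of_le σ hσ (fun m ↦ hkk' (.inl m)) fun p ↦ hkk' (.inr p)

theorem lintegral_lintegral_combine_le {w : ℝ → ℝ≥0∞} (hw : Measurable w) {B : ℝ≥0∞}
    (hB : ∀ s, ∫⁻ t, damping (t + s) * w t ≤ B) :
    ∫⁻ kA : FreeIndex σ → ℝ, (∫⁻ kL : LeftIndex σ → ℝ,
        (∏ j, damping (partialSum (combine σ hσ kA kL) j)) * ∏ p, w (kL p)) * ∏ m, w (kA m) ≤
      B ^ Fintype.card (FreeIndex σ ⊕ LeftIndex σ) := by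
  have hcombine := measurable_combine σ hσ
  let F : (FreeIndex σ → ℝ) × (LeftIndex σ → ℝ) → ℝ≥0∞ := fun k ↦
    (∏ j, damping (partialSum (combine σ hσ k.1 k.2) j)) * (∏ p, w (k.2 p)) * ∏ m, w (k.1 m)
  have hF : Measurable F := by fun_prop
  calc _ = ∫⁻ kA, ∫⁻ kL, F (kA, kL) := by
        refine lintegral_congr fun kA ↦ (lintegral_mul_const _ ?_).symm
        have := (isAdaptedExtension_combine_left σ hσ kA).measurable
        fun_prop
    _ = ∫⁻ k, F k := (lintegral_prod F hF.aemeasurable).symm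
    _ = ∫⁻ k : FreeIndex σ ⊕ LeftIndex σ → ℝ, F (fun m ↦ k (.inl m), fun p ↦ k (.inr p)) :=
        ((volume_measurePreserving_sumPiEquivProdPi fun _ ↦ ℝ).lintegral_comp hF).symm
    _ ≤ B ^ Fintype.card (FreeIndex σ ⊕ LeftIndex σ) := by
        convert (isAdaptedExtension_combine_sum σ hσ).lintegral_prod_damping_mul_prod_le hw hB
          using 3 with k
        rw [Fintype.prod_sum_type]
        ring

theorem lintegral_sq_lintegral_combine_le {w : ℝ → ℝ≥0∞} (hw : Measurable w) {B : ℝ≥0∞}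
    (hB : ∀ s, ∫⁻ t, damping (t + s) * w t ≤ B) :
    ∫⁻ kA : FreeIndex σ → ℝ, (∫⁻ kL : LeftIndex σ → ℝ,
        (∏ j, damping (partialSum (combine σ hσ kA kL) j)) * ∏ p, w (kL p)) ^ 2 * ∏ m, w (kA m) ≤
      B ^ Fintype.card (LeftIndex σ) * B ^ Fintype.card (FreeIndex σ ⊕ LeftIndex σ) := by
  have hcombine := measurable_combine σ hσ
  set g : (FreeIndex σ → ℝ) → ℝ≥0∞ := fun kA ↦ ∫⁻ kL : LeftIndex σ → ℝ,
    (∏ j, damping (partialSum (combine σ hσ kA kL) j)) * ∏ p, w (kL p)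
  have hg : Measurable g := Measurable.lintegral_prod_right' (f := fun k ↦
    (∏ j, damping (partialSum (combine σ hσ k.1 k.2) j)) * ∏ p, w (k.2 p)) (by fun_prop)
  have hg_le (kA) : g kA ≤ B ^ Fintype.card (LeftIndex σ) :=
    (isAdaptedExtension_combine_left σ hσ kA).lintegral_prod_damping_mul_prod_le hw hB
  calc ∫⁻ kA, g kA ^ 2 * ∏ m, w (kA m)
      ≤ ∫⁻ kA, B ^ Fintype.card (LeftIndex σ) * (g kA * ∏ m, w (kA m)) := by
        refine lintegral_mono fun kA ↦ ?_
        rw [sq, mul_assoc]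
        gcongr
        exact hg_le kA
    _ = B ^ Fintype.card (LeftIndex σ) * ∫⁻ kA, g kA * ∏ m, w (kA m) :=
        lintegral_const_mul _ (by fun_prop)
    _ ≤ _ := by
        gcongr
        exact lintegral_lintegral_combine_le σ hσ hw hB

end Pairing

section Weight

theorem rpow_mul_rpow_le_rpow_add_rpow {x y p q : ℝ} (hx : 0 < x) (hy : 0 < y) (hp : p ≤ 0)
    (hq : q ≤ 0) : x ^ p * y ^ q ≤ x ^ (p + q) + y ^ (p + q) := by
  rw [Real.rpow_add hx, Real.rpow_add hy]
  rcases le_total x y with hxy | hyx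
  · have := Real.rpow_le_rpow_of_nonpos hx hxy hq
    exact le_add_of_le_of_nonneg (by gcongr) (by positivity)
  · have := Real.rpow_le_rpow_of_nonpos hy hyx hp
    exact le_add_of_nonneg_of_le (by positivity) (by gcongr)

theorem one_add_log_mul_rpow_le {r x : ℝ} (hr : r < 0) (hx : 1 ≤ x) :
    (1 + Real.log x) * x ^ r ≤ (1 - 2 / r) * x ^ (r / 2) := by
  have hlog : Real.log x ≤ x ^ (-(r / 2)) / (-(r / 2)) :=
    Real.log_le_rpow_div (by linarith) (by linarith)
  have hone : 1 ≤ x ^ (-(r / 2)) := Real.one_le_rpow hx (by linarith)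
  calc (1 + Real.log x) * x ^ r
      ≤ (x ^ (-(r / 2)) + x ^ (-(r / 2)) / (-(r / 2))) * x ^ r := by gcongr
    _ = (1 - 2 / r) * (x ^ (-(r / 2)) * x ^ r) := by
        field_simp
        ring
    _ = (1 - 2 / r) * x ^ (r / 2) := by
        rw [← Real.rpow_add (by linarith)]
        ring_nf

theorem rpow_le_two_rpow_neg_mul_one_add_rpow {p x : ℝ} (hp : p ≤ 0) (hx : 1 ≤ x) :
    x ^ p ≤ 2 ^ (-p) * (1 + x) ^ p := by
  calc x ^ p ≤ ((1 + x) / 2) ^ p :=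
        Real.rpow_le_rpow_of_nonpos (by linarith) (by linarith) hp
    _ = 2 ^ (-p) * (1 + x) ^ p := by
        rw [Real.div_rpow (by linarith) zero_le_two, Real.rpow_neg zero_le_two]
        ring

/-- The weight `(1 + log⁺ |k|) |k| ^ r` as an extended nonnegative real; the weight `w` of the
theorem has exponent `r = 1 - 2 * α`. -/
noncomputable def logPowWeight (r k : ℝ) : ℝ≥0∞ :=
  ENNReal.ofReal ((1 + max (Real.log |k|) 0) * |k| ^ r)

theorem measurable_logPowWeight (r : ℝ) : Measurable (logPowWeight r) := by
  unfold logPowWeight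
  fun_prop

theorem setLIntegral_Icc_logPowWeight_lt_top {r : ℝ} (hr : -1 < r) :
    ∫⁻ k in Set.Icc (-1) 1, logPowWeight r k < ⊤ := by
  have hint : IntegrableOn (fun k : ℝ ↦ |k| ^ r) (Set.Icc (-1) 1) := by
    rw [← intervalIntegrable_iff_integrableOn_Icc_of_le (by norm_num)]
    simpa only [Complex.norm_cpow_real, Complex.norm_real, Real.norm_eq_abs] using
      (intervalIntegral.intervalIntegrable_cpow' (r := (r : ℂ)) hr).norm
  refine lt_of_eq_of_lt (setLIntegral_congr_fun measurableSet_Icc fun k hk ↦ ?_)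
    hint.lintegral_lt_top
  have hlog : Real.log |k| ≤ 0 := Real.log_nonpos (abs_nonneg k) (abs_le.2 hk)
  simp only [logPowWeight, max_eq_right hlog, add_zero, one_mul]

theorem damping_mul_logPowWeight_le {r k : ℝ} (hr : r < 0) (hk : 1 ≤ |k|) (s : ℝ) :
    damping (k + s) * logPowWeight r k ≤ ENNReal.ofReal ((1 - 2 / r) * 2 ^ (-(r / 2))) *
      (ENNReal.ofReal ((1 + ‖k‖) ^ (-(1 - r / 2))) +
        ENNReal.ofReal ((1 + ‖k + s‖) ^ (-(1 - r / 2)))) := by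
  have hcoeff : 0 ≤ 1 - 2 / r := by
    have := div_neg_of_pos_of_neg two_pos hr
    linarith
  have hweight : (1 + max (Real.log |k|) 0) * |k| ^ r ≤
      (1 - 2 / r) * (2 ^ (-(r / 2)) * (1 + |k|) ^ (r / 2)) := by
    rw [max_eq_left (Real.log_nonneg hk)]
    refine (one_add_log_mul_rpow_le hr hk).trans ?_
    gcongr
    exact rpow_le_two_rpow_neg_mul_one_add_rpow (by linarith) hk
  have hsplit : (1 + |k|) ^ (r / 2) * (1 + |k + s|)⁻¹ ≤
      (1 + |k|) ^ (-(1 - r / 2)) + (1 + |k + s|) ^ (-(1 - r / 2)) := by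
    rw [← Real.rpow_neg_one (1 + |k + s|), show -(1 - r / 2) = r / 2 + -1 by ring]
    exact rpow_mul_rpow_le_rpow_add_rpow (by positivity) (by positivity) (by linarith) (by norm_num)
  rw [damping, logPowWeight, ← ENNReal.ofReal_add (by positivity) (by positivity),
    ← ENNReal.ofReal_mul (by positivity), ← ENNReal.ofReal_mul (by positivity)]
  refine ENNReal.ofReal_le_ofReal ?_
  calc (1 + |k + s|)⁻¹ * ((1 + max (Real.log |k|) 0) * |k| ^ r)
      ≤ (1 + |k + s|)⁻¹ * ((1 - 2 / r) * (2 ^ (-(r / 2)) * (1 + |k|) ^ (r / 2))) := by gcongr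
    _ = (1 - 2 / r) * 2 ^ (-(r / 2)) * ((1 + |k|) ^ (r / 2) * (1 + |k + s|)⁻¹) := by ring
    _ ≤ _ := by
        gcongr
        exact hsplit

theorem exists_lintegral_damping_mul_logPowWeight_le {r : ℝ} (hr : -1 < r) (hr' : r < 0) :
    ∃ B < ⊤, ∀ s, ∫⁻ k, damping (k + s) * logPowWeight r k ≤ B := by
  set c := ENNReal.ofReal ((1 - 2 / r) * 2 ^ (-(r / 2)))
  set tail : ℝ → ℝ≥0∞ := fun k ↦ ENNReal.ofReal ((1 + ‖k‖) ^ (-(1 - r / 2)))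
  have htail : Measurable tail := by fun_prop
  have htail_lt_top : ∫⁻ k, tail k < ⊤ :=
    finite_integral_one_add_norm (by rw [Module.finrank_self, Nat.cast_one]; linarith)
  refine ⟨(∫⁻ k in Set.Icc (-1) 1, logPowWeight r k) + c * ((∫⁻ k, tail k) + ∫⁻ k, tail k),
    ENNReal.add_lt_top.2 ⟨setLIntegral_Icc_logPowWeight_lt_top hr, by finiteness⟩, fun s ↦ ?_⟩
  rw [← lintegral_add_compl _ (measurableSet_Icc (a := (-1 : ℝ)) (b := 1))]
  gcongr ?_ + ?_
  · exact lintegral_mono fun k ↦ mul_le_of_le_one_left' (damping_le_one _)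
  · calc ∫⁻ k in (Set.Icc (-1) 1)ᶜ, damping (k + s) * logPowWeight r k
        ≤ ∫⁻ k in (Set.Icc (-1) 1)ᶜ, c * (tail k + tail (k + s)) :=
          setLIntegral_mono' measurableSet_Icc.compl fun k hk ↦
            damping_mul_logPowWeight_le hr' (not_le.1 (mt abs_le.1 hk)).le s
      _ ≤ ∫⁻ k, c * (tail k + tail (k + s)) := setLIntegral_le_lintegral _ _
      _ = c * ((∫⁻ k, tail k) + ∫⁻ k, tail k) := by
          rw [lintegral_const_mul _ (by fun_prop), lintegral_add_left htail,
            lintegral_add_right_eq_self tail s]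

end Weight

/-- Let `α ∈ (1/2,1)` and let a pairing structure on `{1,…,n}` be given.
With `w(k) = (1 + log⁺|k|)|k|^{1-2α}` and
`g((k_m)_{m∈A}) = ∫_{ℝ^L} Π_{j=1}^n (1+|S_j|)⁻¹ Π_{p∈L} w(k_p) d(k_p)_{p∈L}`,
one has `∫_{ℝ^A} g² Π_{m∈A} w(k_m) d(k_m)_{m∈A} < ∞`. -/
theorem stmt16 (α : ℝ) (hα1 : 1 / 2 < α) (hα2 : α < 1)
    (n : ℕ) (σ : Equiv.Perm (Fin n)) (hσ : ∀ j, σ (σ j) = j) :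
    ∫⁻ kA : {j : Fin n // σ j = j} → ℝ,
      (∫⁻ kL : {j : Fin n // j < σ j} → ℝ,
          ENNReal.ofReal
            ((∏ j : Fin n, (1 + |partialSum (combine σ hσ kA kL) j|)⁻¹) *
              ∏ p : {j : Fin n // j < σ j},
                (1 + max (Real.log |kL p|) 0) * |kL p| ^ (1 - 2 * α))) ^ 2 *
        ∏ m : {j : Fin n // σ j = j},
          ENNReal.ofReal ((1 + max (Real.log |kA m|) 0) * |kA m| ^ (1 - 2 * α))
      < ⊤ := by
  obtain ⟨B, hB_lt_top, hB⟩ :=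
    exists_lintegral_damping_mul_logPowWeight_le (r := 1 - 2 * α) (by linarith) (by linarith)
  have hfactor (kA : FreeIndex σ → ℝ) (kL : LeftIndex σ → ℝ) :
      ENNReal.ofReal ((∏ j, (1 + |partialSum (combine σ hσ kA kL) j|)⁻¹) *
        ∏ p, (1 + max (Real.log |kL p|) 0) * |kL p| ^ (1 - 2 * α)) =
      (∏ j, damping (partialSum (combine σ hσ kA kL) j)) *
        ∏ p, logPowWeight (1 - 2 * α) (kL p) := by
    rw [ENNReal.ofReal_mul (by positivity), ENNReal.ofReal_prod_of_nonneg fun _ _ ↦ by positivity,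
      ENNReal.ofReal_prod_of_nonneg fun _ _ ↦ by positivity]
    rfl
  simp only [hfactor]
  exact (lintegral_sq_lintegral_combine_le σ hσ (measurable_logPowWeight _) hB).trans_lt
    (by finiteness)
end
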